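/- Let $d \ge 2$ and let $D \subset \mathbb{R}^d$ be a bounded smooth domain with Poisson kernel $k_D(x,z)$, Green's kernel $g_D(x,y)$, and moment densities $\rho_D(x, z_1, \ldots, z_n)$ defined recursively by $\rho_D(x, z_{\{i\}}) = k_D(x, z_i)$ and $\rho_D(x, z_A) = \sum_{\emptyset \ne B \subsetneq A} \int_D g_D(x,y)\rho_D(y,z_B)\rho_D(y,z_{A\setminus B})\,dy$ for $|A| \ge 2$. Then for any compact $C \subset D$ there exists $\lambda > 0$, depending only on $C$ and $D$, such that $\rho_D(x, z_1, \ldots, z_n) \le \lambda^n\, \rho_D(x_0, z_1, \ldots, z_n)$ for all $n \ge 1$, all $x, x_0 \in C$, and all distinct $z_1, \ldots, z_n \in \partial D$. -/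

import Mathlib

open Metric ENNReal MeasureTheory Finset

/-!
If `x` is close to `p`, some homeomorphism of `D` moves `p` to `x`, is the identity off a small ball
around `p`, and distorts distances by at most a factor `2`. Hence it distorts volumes by a bounded
factor, positive harmonic functions by a bounded factor (Harnack), and the Green kernel by a bounded
factor: away from the diagonal by Harnack again, near it because the singularity dominates the
harmonic corrector. Transporting the recursion for the moment densities along this map costs one
such factor for every vertex of a binary tree with `n` leaves, of which there are `2 n - 1`, so
the densities at `x` and `p` agree up to a factor exponential in `n`. The local comparisons are
chained along `D`; finitely many suffice for a compact subset.
-/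

section Chaining

open Filter Topology

theorem exists_forall_rel_of_isPreconnected_of_isCompact {X M : Type*} [TopologicalSpace X]
    [SemilatticeSup M] [Nonempty M] [Mul M] {R : M → X → X → Prop}
    (hmono : ∀ x y, Monotone fun a => R a x y)
    (htrans : ∀ {a b x y w}, R a x y → R b y w → R (a * b) x w)
    {C D : Set X} (hD : IsPreconnected D)
    (hloc : ∀ p ∈ D, ∃ a, ∀ᶠ q in 𝓝[D] p, R a p q ∧ R a q p)
    (hC : IsCompact C) (hCD : C ⊆ D) : ∃ a, ∀ x ∈ C, ∀ y ∈ C, R a x y := by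
  have hpair : ∀ p ∈ D, ∀ q ∈ D, ∃ a, R a p q := by
    refine fun p hp q hq => hD.induction₂' (fun x y => ∃ a, R a x y) ?_ ?_ hp hq
    · intro x hx
      obtain ⟨a, ha⟩ := hloc x hx
      filter_upwards [ha] with y hy using ⟨⟨a, hy.1⟩, ⟨a, hy.2⟩⟩
    · rintro x y w - - - ⟨a, ha⟩ ⟨b, hb⟩
      exact ⟨a * b, htrans ha hb⟩
  suffices h : ∃ a, ∀ z ∈ C ×ˢ C, R a z.1 z.2 from
    h.imp fun a ha x hx y hy => ha (x, y) ⟨hx, hy⟩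
  refine (hC.prod hC).induction_on (p := fun S => ∃ a, ∀ z ∈ S, R a z.1 z.2) ?_ ?_ ?_ ?_
  · exact ⟨Classical.arbitrary M, fun z hz => hz.elim⟩
  · exact fun S T hST ⟨a, ha⟩ => ⟨a, fun z hz => ha z (hST hz)⟩
  · rintro S T ⟨a, ha⟩ ⟨b, hb⟩
    exact ⟨a ⊔ b, fun z hz => hz.elim (fun h => hmono _ _ le_sup_left (ha z h))
      fun h => hmono _ _ le_sup_right (hb z h)⟩
  · rintro ⟨p, q⟩ ⟨hp, hq⟩
    obtain ⟨a, ha⟩ := hloc p (hCD hp)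
    obtain ⟨b, hb⟩ := hloc q (hCD hq)
    obtain ⟨c, hc⟩ := hpair p (hCD hp) q (hCD hq)
    refine ⟨{z | R a z.1 p ∧ R b q z.2}, ?_, a * c * b, fun z hz =>
      htrans (htrans hz.1 hc) hz.2⟩
    rw [nhdsWithin_prod_eq]
    exact prod_mem_prod (nhdsWithin_mono p hCD (ha.mono fun _ h => h.2))
      (nhdsWithin_mono q hCD (hb.mono fun _ h => h.1))

end Chaining

section MomentFamily

variable {α ι : Type*} [DecidableEq ι] [MeasurableSpace α] {μ : Measure α} {D : Set α}
  {g : α → α → ℝ≥0∞} {u : ι → α → ℝ≥0∞} {ρ : α → Finset ι → ℝ≥0∞}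

/-- The moment densities on `D` with Green kernel `g` and one-point densities `u i`: here `ρ x A`
stands for `ρ_D(x, z_A)` and `u i x` for `k_D(x, z_i)`. -/
structure IsMomentFamily (μ : Measure α) (D : Set α) (g : α → α → ℝ≥0∞) (u : ι → α → ℝ≥0∞)
    (ρ : α → Finset ι → ℝ≥0∞) : Prop where
  singleton : ∀ x ∈ D, ∀ i, ρ x {i} = u i x
  recursion : ∀ x ∈ D, ∀ A : Finset ι, 2 ≤ A.card →
    ρ x A = ∑ B ∈ A.powerset.filter (fun B => B ≠ ∅ ∧ B ≠ A),
      ∫⁻ y in D, g x y * ρ y B * ρ y (A \ B) ∂μ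

/-- The extra factor `K` on the left makes the induction close: unfolding the recursion expresses
`ρ x A` through binary trees with `A.card` leaves, hence `2 * A.card - 1` vertices, and every
vertex costs a factor `K`. -/
theorem IsMomentFamily.mul_comp_le_pow_card_mul (h : IsMomentFamily μ D g u ρ)
    (hD : MeasurableSet D) {T : α → α} (hT : Set.MapsTo T D D) {V K : ℝ≥0∞} (hK : K ≠ ∞)
    (hvol : ∀ F : α → ℝ≥0∞, ∫⁻ y in D, F y ∂μ ≤ V * ∫⁻ y in D, F (T y) ∂μ)
    (hg : ∀ x ∈ D, ∀ᵐ y ∂μ.restrict D, V * g (T x) (T y) ≤ K * g x y)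
    {A : Finset ι} (hA : A.Nonempty) (hu : ∀ i ∈ A, ∀ x ∈ D, u i (T x) ≤ K * u i x)
    {x : α} (hx : x ∈ D) : K * ρ (T x) A ≤ (K ^ 2) ^ A.card * ρ x A := by
  induction A using Finset.strongInduction generalizing x with | H A ih
  obtain hcard | hcard : A.card = 1 ∨ 2 ≤ A.card := by have := hA.card_pos; omega
  · obtain ⟨i, rfl⟩ := card_eq_one.1 hcard
    rw [h.singleton _ (hT hx), h.singleton _ hx, hcard, pow_one, sq, mul_assoc]
    gcongr
    exact hu i (mem_singleton_self i) x hx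
  rw [h.recursion _ (hT hx) A hcard, h.recursion _ hx A hcard, mul_sum, mul_sum]
  refine sum_le_sum fun B hB => ?_
  obtain ⟨hBA, hB, hBne⟩ : B ⊆ A ∧ B ≠ ∅ ∧ B ≠ A := by simpa using hB
  have ihB {y} (hy : y ∈ D) : K * ρ (T y) B ≤ (K ^ 2) ^ B.card * ρ y B :=
    ih B (hBA.ssubset_of_ne hBne) (nonempty_iff_ne_empty.2 hB) (fun i hi => hu i (hBA hi)) hy
  have ihAB {y} (hy : y ∈ D) : K * ρ (T y) (A \ B) ≤ (K ^ 2) ^ (A \ B).card * ρ y (A \ B) :=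
    ih _ (sdiff_ssubset hBA (nonempty_iff_ne_empty.2 hB))
      (sdiff_nonempty.2 fun hAB => hBne (hBA.antisymm hAB))
      (fun i hi => hu i (sdiff_subset hi)) hy
  calc K * ∫⁻ y in D, g (T x) y * ρ y B * ρ y (A \ B) ∂μ
      ≤ K * (V * ∫⁻ y in D, g (T x) (T y) * ρ (T y) B * ρ (T y) (A \ B) ∂μ) := by
        gcongr
        exact hvol fun y => g (T x) y * ρ y B * ρ y (A \ B)
    _ ≤ ∫⁻ y in D, K * V * (g (T x) (T y) * ρ (T y) B * ρ (T y) (A \ B)) ∂μ := by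
        rw [← mul_assoc]
        exact lintegral_const_mul_le _ _
    _ ≤ ∫⁻ y in D, (K ^ 2) ^ A.card * (g x y * ρ y B * ρ y (A \ B)) ∂μ := by
        refine lintegral_mono_ae ?_
        filter_upwards [hg x hx, ae_restrict_mem hD] with y hgy hy
        calc K * V * (g (T x) (T y) * ρ (T y) B * ρ (T y) (A \ B))
            = V * g (T x) (T y) * ρ (T y) B * (K * ρ (T y) (A \ B)) := by ring
          _ ≤ K * g x y * ρ (T y) B * ((K ^ 2) ^ (A \ B).card * ρ y (A \ B)) := by
            gcongr ?_ * _ * ?_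
            exact ihAB hy
          _ = g x y * (K * ρ (T y) B) * ((K ^ 2) ^ (A \ B).card * ρ y (A \ B)) := by ring
          _ ≤ g x y * ((K ^ 2) ^ B.card * ρ y B) * ((K ^ 2) ^ (A \ B).card * ρ y (A \ B)) := by
            gcongr _ * ?_ * _
            exact ihB hy
          _ = (K ^ 2) ^ A.card * (g x y * ρ y B * ρ y (A \ B)) := by
            rw [← card_sdiff_add_card_eq_card hBA, pow_add]
            ring
    _ = (K ^ 2) ^ A.card * ∫⁻ y in D, g x y * ρ y B * ρ y (A \ B) ∂μ :=
        lintegral_const_mul' _ _ (by finiteness)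

end MomentFamily

section Perturbation

open Module
open scoped NNReal

variable {X : Type*} [PseudoMetricSpace X]

/-- `T` is a homeomorphism that moves only points of `ball p r` and distorts distances by at most a
factor `2`; such maps are used to transport one pole of a kernel to another. -/
structure IsLocalPerturbation (T : X ≃ₜ X) (p : X) (r : ℝ) : Prop where
  apply_eq_self : ∀ x ∉ ball p r, T x = x
  lipschitzWith : LipschitzWith 2 T
  lipschitzWith_symm : LipschitzWith 2 T.symm

namespace IsLocalPerturbation

variable {T : X ≃ₜ X} {p : X} {r : ℝ}

theorem symm (hT : IsLocalPerturbation T p r) : IsLocalPerturbation T.symm p r where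
  apply_eq_self x hx := T.symm_apply_eq.2 (hT.apply_eq_self x hx).symm
  lipschitzWith := hT.lipschitzWith_symm
  lipschitzWith_symm := hT.lipschitzWith

theorem apply_mem_ball (hT : IsLocalPerturbation T p r) {x : X} (hx : x ∈ ball p r) :
    T x ∈ ball p r := by
  by_contra h
  exact h ((T.injective (hT.apply_eq_self _ h)).symm ▸ hx)

theorem apply_mem (hT : IsLocalPerturbation T p r) {D : Set X} (hD : ball p r ⊆ D) {x : X}
    (hx : x ∈ D) : T x ∈ D := by
  by_cases hxp : x ∈ ball p r
  · exact hD (hT.apply_mem_ball hxp)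
  · rwa [hT.apply_eq_self x hxp]

theorem preimage_eq (hT : IsLocalPerturbation T p r) {D : Set X} (hD : ball p r ⊆ D) :
    T ⁻¹' D = D :=
  Set.Subset.antisymm
    (fun x hx => by simpa using hT.symm.apply_mem hD (Set.mem_preimage.1 hx))
    fun _ hx => hT.apply_mem hD hx

end IsLocalPerturbation

variable {E : Type*} [NormedAddCommGroup E] [NormedSpace ℝ E]

theorem exists_homeomorph_eq_id_add [CompleteSpace E] {f : E → E} {c : ℝ≥0}
    (hf : LipschitzWith c f) (hc : c < 1) :
    ∃ T : E ≃ₜ E, (∀ x, T x = x + f x) ∧ LipschitzWith (1 + c) T ∧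
      LipschitzWith (1 - c)⁻¹ T.symm := by
  have happrox : ApproximatesLinearOn (fun x => x + f x)
      (ContinuousLinearEquiv.refl ℝ E : E →L[ℝ] E) Set.univ c := fun x _ y _ => by
    simpa [add_sub_add_comm] using hf.norm_sub_le x y
  have hc' : Subsingleton E ∨
      c < ‖((ContinuousLinearEquiv.refl ℝ E).symm : E →L[ℝ] E)‖₊⁻¹ := by
    rcases subsingleton_or_nontrivial E with hE | hE
    · exact .inl hE
    · right
      simpa [-NNReal.coe_lt_coe, ContinuousLinearMap.nnnorm_id] using hc
  have hlower : AntilipschitzWith (1 - c)⁻¹ fun x => x + f x := by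
    simpa using AntilipschitzWith.id.add_lipschitzWith hf (by simpa using hc)
  let T : E ≃ₜ E := happrox.toHomeomorph _ hc'
  exact ⟨T, fun x => rfl, LipschitzWith.id.add hf, hlower.to_rightInverse T.right_inv⟩

theorem lipschitzWith_tent_smul {p v : E} {r : ℝ} (hr : 0 < r) (hv : ‖v‖ ≤ r / 2) :
    LipschitzWith (1 / 2) fun y => max 0 (1 - dist y p / r) • v := by
  refine LipschitzWith.of_dist_le_mul fun x y => ?_
  have htent : |max 0 (1 - dist x p / r) - max 0 (1 - dist y p / r)| ≤ dist x y / r := by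
    calc |max 0 (1 - dist x p / r) - max 0 (1 - dist y p / r)|
        ≤ |1 - dist x p / r - (1 - dist y p / r)| := by
          simpa only [max_comm (0 : ℝ)] using abs_max_sub_max_le_abs _ _ (0 : ℝ)
      _ = |dist y p - dist x p| / r := by
        rw [← abs_of_pos hr, ← abs_div, abs_of_pos hr]
        ring_nf
      _ ≤ dist x y / r := by
        gcongr
        rw [dist_comm x y]
        exact abs_dist_sub_le y x p
  rw [dist_eq_norm, ← sub_smul, norm_smul, Real.norm_eq_abs]
  calc |max 0 (1 - dist x p / r) - max 0 (1 - dist y p / r)| * ‖v‖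
      ≤ dist x y / r * (r / 2) := by gcongr
    _ = ((1 / 2 : ℝ≥0) : ℝ) * dist x y := by
      push_cast
      field_simp

theorem exists_isLocalPerturbation_apply_eq [CompleteSpace E] {p q : E} {r : ℝ}
    (hq : q ∈ ball p (r / 2)) :
    ∃ T : E ≃ₜ E, IsLocalPerturbation T p r ∧ T p = q := by
  have hr : 0 < r := by linarith [pos_of_mem_ball hq]
  have hqp : ‖q - p‖ ≤ r / 2 := (mem_ball_iff_norm.1 hq).le
  obtain ⟨T, hT, hlip, hlip_symm⟩ :=
    exists_homeomorph_eq_id_add (lipschitzWith_tent_smul (p := p) hr hqp)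
      (NNReal.half_lt_self one_ne_zero)
  refine ⟨T, ⟨fun x hx => ?_, hlip.weaken ?_, hlip_symm.weaken ?_⟩, by simp [hT]⟩
  · have hxp : 1 ≤ dist x p / r := (one_le_div hr).2 (not_lt.1 hx)
    rw [hT, max_eq_left (by linarith), zero_smul, add_zero]
  · rw [← NNReal.coe_le_coe]
    norm_num
  · rw [← NNReal.coe_le_coe, NNReal.coe_inv, NNReal.coe_sub (by norm_num)]
    norm_num

variable [FiniteDimensional ℝ E] [MeasurableSpace E] [BorelSpace E] {μ : Measure E}
  [μ.IsAddHaarMeasure]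

theorem measure_le_pow_finrank_smul_map {T : E ≃ₜ E} {K : ℝ≥0} (hT : LipschitzWith K T) :
    μ ≤ (K ^ finrank ℝ E : ℝ≥0∞) • μ.map T := by
  obtain ⟨c, hc⟩ : ∃ c : ℝ≥0, μ = c • (μH[finrank ℝ E] : Measure E) :=
    ⟨_, Measure.isAddLeftInvariant_eq_smul μ _⟩
  refine Measure.le_iff.2 fun s hs => ?_
  have himage : μH[finrank ℝ E] s ≤ (K : ℝ≥0∞) ^ finrank ℝ E * μH[finrank ℝ E] (T ⁻¹' s) := by
    simpa [T.image_preimage, ENNReal.rpow_natCast] using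
      hT.hausdorffMeasure_image_le (Nat.cast_nonneg (finrank ℝ E)) (T ⁻¹' s)
  rw [Measure.smul_apply, Measure.map_apply T.measurable hs, hc, Measure.smul_apply,
    Measure.smul_apply, smul_comm]
  gcongr
  exact himage

theorem setLIntegral_le_pow_finrank_mul_setLIntegral_comp {T : E ≃ₜ E} {K : ℝ≥0}
    (hT : LipschitzWith K T) (S : Set E) (F : E → ℝ≥0∞) :
    ∫⁻ y in S, F y ∂μ ≤ K ^ finrank ℝ E * ∫⁻ y in T ⁻¹' S, F (T y) ∂μ := by
  calc ∫⁻ y in S, F y ∂μ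
      ≤ ∫⁻ y in S, F y ∂((K ^ finrank ℝ E : ℝ≥0∞) • μ.map T) := by
        gcongr
        exact measure_le_pow_finrank_smul_map hT
    _ = K ^ finrank ℝ E * ∫⁻ y in T ⁻¹' S, F (T y) ∂μ := by
        rw [Measure.restrict_smul, lintegral_smul_measure, smul_eq_mul,
          T.measurableEmbedding.restrict_map, T.measurableEmbedding.lintegral_map]

end Perturbation

section PolarCoordinates

open Module

theorem integral_volumeIoiPow {F : Type*} [NormedAddCommGroup F] [NormedSpace ℝ F] (n : ℕ)
    (f : ℝ → F) :
    ∫ t : Set.Ioi (0 : ℝ), f t ∂Measure.volumeIoiPow n = ∫ t in Set.Ioi (0 : ℝ), t ^ n • f t := by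
  simp only [Measure.volumeIoiPow, ENNReal.ofReal]
  rw [integral_withDensity_eq_integral_smul (measurable_subtype_coe.pow_const n).real_toNNReal,
    integral_subtype_comap measurableSet_Ioi fun t => Real.toNNReal (t ^ n) • f t]
  refine setIntegral_congr_fun measurableSet_Ioi fun t ht => ?_
  simp only [NNReal.smul_def, Real.coe_toNNReal _ (pow_nonneg (Set.mem_Ioi.1 ht).le n)]

variable {E : Type*} [NormedAddCommGroup E]

theorem exists_Ioi_inter_preimage_smul_ball_eq_ball [InnerProductSpace ℝ E] {θ b : E}
    {R : ℝ} (hθ : ‖θ‖ = 1) (hR : 0 ≤ R) (hRb : R < ‖b‖) :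
    ∃ s, Set.Ioi 0 ∩ (· • θ) ⁻¹' ball b R = ball (inner ℝ θ b : ℝ) s := by
  set β : ℝ := inner ℝ θ b
  have hmem (t : ℝ) : t • θ ∈ ball b R ↔ (t - β) ^ 2 < R ^ 2 - ‖b‖ ^ 2 + β ^ 2 := by
    have hsq : ‖t • θ - b‖ ^ 2 = (t - β) ^ 2 - β ^ 2 + ‖b‖ ^ 2 := by
      rw [norm_sub_sq_real, norm_smul, hθ, real_inner_smul_left, mul_one, Real.norm_eq_abs, sq_abs]
      ring
    rw [mem_ball_iff_norm, ← sq_lt_sq₀ (norm_nonneg _) hR, hsq]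
    constructor <;> intro h <;> linarith
  have hRb2 : R ^ 2 < ‖b‖ ^ 2 := pow_lt_pow_left₀ hRb hR two_ne_zero
  have hpos {t : ℝ} (ht : t • θ ∈ ball b R) : 0 < t * β := by
    nlinarith [(hmem t).1 ht, sq_nonneg t]
  rcases le_or_gt β 0 with hβ | hβ
  · refine ⟨0, ?_⟩
    rw [ball_zero, Set.eq_empty_iff_forall_notMem]
    rintro t ⟨ht, htb⟩
    exact (hpos htb).not_ge (mul_nonpos_of_nonneg_of_nonpos (Set.mem_Ioi.1 ht).le hβ)
  · refine ⟨√(R ^ 2 - ‖b‖ ^ 2 + β ^ 2), Set.ext fun t => ?_⟩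
    rw [mem_ball, Real.dist_eq, Real.lt_sqrt (abs_nonneg _), sq_abs, ← hmem]
    exact and_iff_right_of_imp fun ht => pos_of_mul_pos_left (hpos ht) hβ.le

variable [MeasurableSpace E] [BorelSpace E] {μ : Measure E}

theorem integral_eq_integral_toSphere_setIntegral_Ioi [NormedSpace ℝ E] [FiniteDimensional ℝ E]
    [Nontrivial E] [μ.IsAddHaarMeasure] {F : Type*} [NormedAddCommGroup F] [NormedSpace ℝ F]
    {f : E → F} (hf : Integrable f μ) :
    ∫ x, f x ∂μ =
      ∫ θ : sphere (0 : E) 1,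
        (∫ t in Set.Ioi (0 : ℝ), t ^ (finrank ℝ E - 1) • f (t • (θ : E))) ∂μ.toSphere := by
  have hpolar := μ.measurePreserving_homeomorphUnitSphereProd
  have hemb := (homeomorphUnitSphereProd E).measurableEmbedding
  have hinv (x : ({0}ᶜ : Set E)) :
      (homeomorphUnitSphereProd E x).2.1 • (homeomorphUnitSphereProd E x).1.1 = x.1 := by
    simp [smul_smul, norm_ne_zero_iff.2 x.2]
  have hint : Integrable (fun q : sphere (0 : E) 1 × Set.Ioi (0 : ℝ) => f (q.2.1 • q.1.1))
      (μ.toSphere.prod (.volumeIoiPow (finrank ℝ E - 1))) := by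
    rw [← hpolar.integrable_comp_emb hemb]
    simp only [Function.comp_def, hinv]
    exact (integrableOn_iff_comap_subtypeVal (measurableSet_singleton _).compl).1 hf.integrableOn
  calc ∫ x, f x ∂μ = ∫ x : ({0}ᶜ : Set E), f x ∂μ.comap (↑) := by
        rw [integral_subtype_comap (measurableSet_singleton _).compl f, restrict_compl_singleton]
    _ = ∫ q, f (q.2.1 • q.1.1) ∂μ.toSphere.prod (.volumeIoiPow (finrank ℝ E - 1)) := by
        simpa only [hinv] using
          hpolar.integral_comp hemb fun q => f (q.2.1 • q.1.1)
    _ = _ := by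
        rw [integral_prod _ hint]
        exact integral_congr_ae
          (.of_forall fun θ => integral_volumeIoiPow _ fun t => f (t • (θ : E)))

theorem setIntegral_ball_sub_center [NormedSpace ℝ E] [FiniteDimensional ℝ E]
    [μ.IsAddHaarMeasure] (c : E) (r : ℝ) : ∫ x in ball c r, (x - c) ∂μ = 0 := by
  have hreflect := integral_sub_left_eq_self ((ball c r).indicator fun x => x - c) μ (c + c)
  have hodd (x : E) : (ball c r).indicator (fun x => x - c) (c + c - x) =
      -(ball c r).indicator (fun x => x - c) x := by
    have hmem : c + c - x ∈ ball c r ↔ x ∈ ball c r := by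
      rw [mem_ball_iff_norm, mem_ball_iff_norm', add_sub_right_comm, add_sub_cancel_right]
    by_cases hx : x ∈ ball c r
    · rw [Set.indicator_of_mem hx, Set.indicator_of_mem (hmem.2 hx)]
      abel
    · rw [Set.indicator_of_notMem hx, Set.indicator_of_notMem (mt hmem.1 hx), neg_zero]
  simp only [hodd, integral_neg, integral_indicator measurableSet_ball] at hreflect
  have : IsAddTorsionFree E := .of_isTorsionFree ℝ E
  exact self_eq_neg.1 hreflect.symm

/-- Each ray from the origin meets the ball in a segment centred at the projection of `b`, and in
polar coordinates the integrand becomes the signed distance to that centre. -/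
theorem setIntegral_ball_inner_sub_div_norm_pow_eq_zero [InnerProductSpace ℝ E]
    [FiniteDimensional ℝ E] [Nontrivial E] [μ.IsAddHaarMeasure] {b : E} {R : ℝ}
    (hR : 0 ≤ R) (hRb : R < ‖b‖) :
    ∫ x in ball b R, (inner ℝ x (x - b) : ℝ) / ‖x‖ ^ finrank ℝ E ∂μ = 0 := by
  have hzero : (0 : E) ∉ closedBall b R := by simpa using hRb
  have hint : IntegrableOn (fun x => (inner ℝ x (x - b) : ℝ) / ‖x‖ ^ finrank ℝ E) (ball b R) μ := by
    refine IntegrableOn.mono_set ?_ ball_subset_closedBall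
    refine ContinuousOn.integrableOn_compact (isCompact_closedBall b R) ?_
    refine ContinuousOn.div (by fun_prop) (by fun_prop) fun x hx => ?_
    exact pow_ne_zero _ (norm_ne_zero_iff.2 (ne_of_mem_of_not_mem hx hzero))
  rw [← integral_indicator measurableSet_ball,
    integral_eq_integral_toSphere_setIntegral_Ioi (hint.integrable_indicator measurableSet_ball)]
  refine integral_eq_zero_of_ae (.of_forall fun θ => ?_)
  have hθ : ‖(θ : E)‖ = 1 := norm_eq_of_mem_sphere θ
  obtain ⟨s, hs⟩ := exists_Ioi_inter_preimage_smul_ball_eq_ball hθ hR hRb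
  have hray {t : ℝ} (ht : 0 < t) : t ^ (finrank ℝ E - 1) •
      ((inner ℝ (t • (θ : E)) (t • (θ : E) - b) : ℝ) / ‖t • (θ : E)‖ ^ finrank ℝ E) =
      t - inner ℝ (θ : E) b := by
    rw [norm_smul, hθ, mul_one, Real.norm_of_nonneg ht.le, inner_sub_right, real_inner_smul_left,
      real_inner_smul_left, real_inner_smul_right, real_inner_self_eq_norm_sq, hθ, smul_eq_mul,
      ← pow_sub_one_mul (finrank_pos (R := ℝ) (M := E)).ne']
    field_simp
  calc ∫ t in Set.Ioi (0 : ℝ), t ^ (finrank ℝ E - 1) • (ball b R).indicator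
        (fun x => (inner ℝ x (x - b) : ℝ) / ‖x‖ ^ finrank ℝ E) (t • (θ : E))
      = ∫ t in Set.Ioi (0 : ℝ), ((· • (θ : E)) ⁻¹' ball b R).indicator
        (fun t => t - inner ℝ (θ : E) b) t := by
        refine setIntegral_congr_fun measurableSet_Ioi fun t ht => ?_
        by_cases htb : t ∈ (· • (θ : E)) ⁻¹' ball b R
        · rw [Set.indicator_of_mem htb, Set.indicator_of_mem (Set.mem_preimage.1 htb), hray ht]
        · rw [Set.indicator_of_notMem htb, Set.indicator_of_notMem (mt Set.mem_preimage.2 htb),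
            smul_zero]
    _ = ∫ t in ball (inner ℝ (θ : E) b : ℝ) s, (t - inner ℝ (θ : E) b) := by
        rw [setIntegral_indicator (measurableSet_ball.preimage (by fun_prop)), hs]
    _ = 0 := setIntegral_ball_sub_center _ _

end PolarCoordinates

section MeanValue

open Filter Module Topology

theorem hasDerivAt_setIntegral_of_isCompact {X F : Type*} [TopologicalSpace X] [T2Space X]
    [MeasurableSpace X] [OpensMeasurableSpace X] {μ : Measure X} [IsFiniteMeasureOnCompacts μ]
    [NormedAddCommGroup F] [NormedSpace ℝ F] {K S : Set X} (hK : IsCompact K)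
    (hS : MeasurableSet S) (hSK : S ⊆ K) {U : Set ℝ} (hU : IsOpen U) {f f' : ℝ → X → F}
    (hf : ∀ s ∈ U, ContinuousOn (f s) K) (hf' : ContinuousOn (Function.uncurry f') (U ×ˢ K))
    (hderiv : ∀ s ∈ U, ∀ x ∈ K, HasDerivAt (f · x) (f' s x) s) {s : ℝ} (hs : s ∈ U) :
    HasDerivAt (fun s => ∫ x in S, f s x ∂μ) (∫ x in S, f' s x ∂μ) s := by
  have hint {s} (hs : s ∈ U) : IntegrableOn (f s) S μ :=
    ((hf s hs).integrableOn_compact hK).mono_set hSK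
  have hint' : IntegrableOn (f' s) S μ := by
    refine ContinuousOn.integrableOn_compact hK ?_ |>.mono_set hSK
    exact hf'.comp (by fun_prop) fun x hx => Set.mk_mem_prod hs hx
  obtain ⟨I, hI, hIU, hIc⟩ := local_compact_nhds (hU.mem_nhds hs)
  obtain ⟨M, hM⟩ := (hIc.prod hK).exists_bound_of_continuousOn
    (hf'.mono (Set.prod_mono hIU subset_rfl))
  have hbound : IntegrableOn (fun _ => M) S μ :=
    (integrableOn_const hK.measure_lt_top.ne).mono_set hSK
  refine (hasDerivAt_integral_of_dominated_loc_of_deriv_le hI ?_ (hint hs)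
    hint'.aestronglyMeasurable ?_ hbound ?_).2
  · filter_upwards [hI] with s hs using (hint (hIU hs)).aestronglyMeasurable
  · filter_upwards [ae_restrict_mem hS] with x hx s hs using hM (s, x) ⟨hs, hSK hx⟩
  · filter_upwards [ae_restrict_mem hS] with x hx s hs using hderiv s (hIU hs) x (hSK hx)

variable {E : Type*} [NormedAddCommGroup E] [MeasurableSpace E]

/-- The mean value property of `f` on the balls of `U`; a continuous function with this property is
harmonic on `U`. If `f` is not integrable on such a ball, the average is `0`. -/
def HasMeanValueOn (μ : Measure E) (f : E → ℝ) (U : Set E) : Prop :=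
  ∀ y ∈ U, ∀ r > 0, closedBall y r ⊆ U → f y = ⨍ w in ball y r, f w ∂μ

namespace HasMeanValueOn

variable {μ : Measure E} {f g : E → ℝ} {U V : Set E}

theorem mono (hf : HasMeanValueOn μ f V) (hUV : U ⊆ V) : HasMeanValueOn μ f U :=
  fun y hy r hr hU => hf y (hUV hy) r hr (hU.trans hUV)

theorem neg (hf : HasMeanValueOn μ f U) : HasMeanValueOn μ (-f) U := fun y hy r hr hU => by
  simpa only [Pi.neg_apply, setAverage_eq, integral_neg, smul_neg, neg_inj] using hf y hy r hr hU

theorem congr [OpensMeasurableSpace E] (hf : HasMeanValueOn μ f U) (hfg : Set.EqOn f g U) :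
    HasMeanValueOn μ g U := fun y hy r hr hU => by
  rw [← hfg hy, hf y hy r hr hU]
  exact setAverage_congr_fun measurableSet_ball
    (.of_forall fun w hw => hfg (hU (ball_subset_closedBall hw)))

theorem sub [OpensMeasurableSpace E] [ProperSpace E] [IsFiniteMeasureOnCompacts μ]
    (hf : HasMeanValueOn μ f U) (hg : HasMeanValueOn μ g U) (hfc : ContinuousOn f U)
    (hgc : ContinuousOn g U) : HasMeanValueOn μ (f - g) U := fun y hy r hr hU => by
  have hint {h : E → ℝ} (hh : ContinuousOn h U) : IntegrableOn h (ball y r) μ :=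
    ((hh.mono hU).integrableOn_compact (isCompact_closedBall y r)).mono_set ball_subset_closedBall
  rw [Pi.sub_apply, hf y hy r hr hU, hg y hy r hr hU, setAverage_eq, setAverage_eq, setAverage_eq,
    ← smul_sub]
  simp only [Pi.sub_apply]
  rw [integral_sub (hint hfc) (hint hgc)]

end HasMeanValueOn

theorem setAverage_ball_eq_setAverage_unitBall [NormedSpace ℝ E] [FiniteDimensional ℝ E]
    [BorelSpace E] {μ : Measure E} [μ.IsAddHaarMeasure] {F : Type*} [NormedAddCommGroup F]
    [NormedSpace ℝ F] (f : E → F) (b : E) {R : ℝ} (hR : 0 < R) :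
    ⨍ x in ball b R, f x ∂μ = ⨍ w in ball 0 1, f (b + R • w) ∂μ := by
  have htranslate : ∫ x in ball b R, f x ∂μ = ∫ x in ball 0 R, f (b + x) ∂μ := by
    have hball : (b + ·) ⁻¹' ball b R = ball 0 R := by
      rw [preimage_add_ball, sub_self]
    rw [← hball, (measurePreserving_add_left μ b).setIntegral_preimage_emb
      (Homeomorph.addLeft b).measurableEmbedding]
  have hvol : μ.real (ball b R) = R ^ finrank ℝ E * μ.real (ball 0 1) := by
    rw [measureReal_def, Measure.addHaar_ball_of_pos μ b hR, toReal_mul,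
      toReal_ofReal (by positivity), ← measureReal_def]
  rw [setAverage_eq, setAverage_eq, htranslate, hvol,
    Measure.setIntegral_comp_smul_of_pos μ (fun x => f (b + x)) _ hR, smul_unitBall_of_pos hR,
    mul_inv_rev, mul_smul]

end MeanValue

section NewtonianProfile

open Filter Module Set Topology

/-- `fun x => Φ ‖x‖` is a multiple of the fundamental solution of the Laplacian in dimension `n`, up
to an additive constant: its flux through every sphere around the origin is the same. -/
structure IsNewtonianProfile (n : ℕ) (κ : ℝ) (Φ : ℝ → ℝ) : Prop where
  pos : 0 < κ
  hasDerivAt : ∀ r > 0, HasDerivAt Φ (-κ / r ^ (n - 1)) r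

namespace IsNewtonianProfile

variable {n : ℕ} {κ : ℝ} {Φ : ℝ → ℝ}

theorem continuousOn (hΦ : IsNewtonianProfile n κ Φ) : ContinuousOn Φ (Ioi 0) :=
  fun r hr => (hΦ.hasDerivAt r hr).continuousAt.continuousWithinAt

theorem strictAntiOn (hΦ : IsNewtonianProfile n κ Φ) : StrictAntiOn Φ (Ioi 0) := by
  refine strictAntiOn_of_deriv_neg (convex_Ioi 0) hΦ.continuousOn fun r hr => ?_
  rw [interior_Ioi] at hr
  rw [(hΦ.hasDerivAt r hr).deriv]
  exact div_neg_of_neg_of_pos (neg_neg_of_pos hΦ.pos) (pow_pos hr _)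

theorem exists_sub_eq (hΦ : IsNewtonianProfile n κ Φ) {a b : ℝ} (ha : 0 < a) (hab : a < b) :
    ∃ r ∈ Ioo a b, Φ a - Φ b = κ / r ^ (n - 1) * (b - a) := by
  obtain ⟨r, hr, hslope⟩ := exists_hasDerivAt_eq_slope Φ (fun r => -κ / r ^ (n - 1)) hab
    (hΦ.continuousOn.mono fun r hr => ha.trans_le hr.1)
    fun r hr => hΦ.hasDerivAt r (ha.trans hr.1)
  refine ⟨r, hr, ?_⟩
  rw [eq_div_iff (sub_pos.2 hab).ne'] at hslope
  linear_combination hslope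

theorem sub_le_pow_mul_sub (hΦ : IsNewtonianProfile n κ Φ) {s : ℝ} (hs : 0 < s) :
    Φ (s / 2) - Φ s ≤ 4 ^ (n - 1) * (Φ s - Φ (2 * s)) := by
  obtain ⟨a, ⟨ha, -⟩, hsub_a⟩ := hΦ.exists_sub_eq (half_pos hs) (half_lt_self hs)
  obtain ⟨b, ⟨hb, hb'⟩, hsub_b⟩ := hΦ.exists_sub_eq hs (show s < 2 * s by linarith)
  have hκ := hΦ.pos
  have hbpos : 0 < b := hs.trans hb
  calc Φ (s / 2) - Φ s = κ / a ^ (n - 1) * (s - s / 2) := hsub_a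
    _ ≤ κ / (b / 4) ^ (n - 1) * s := by
      gcongr <;> linarith
    _ = 4 ^ (n - 1) * (κ / b ^ (n - 1) * (2 * s - s)) := by
      rw [div_pow]
      field_simp
      ring
    _ = 4 ^ (n - 1) * (Φ s - Φ (2 * s)) := by rw [hsub_b]

theorem exists_sub_le_mul_sub (hΦ : IsNewtonianProfile n κ Φ) {δ : ℝ} (hδ : 0 < δ) (m : ℝ) :
    ∃ K ≥ 0, ∀ s > 0, s ≤ δ / 2 → ∀ s', s ≤ 2 * s' → Φ s' - m ≤ K * (Φ s - Φ δ) := by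
  have hδ2 : 0 < Φ (δ / 2) - Φ δ :=
    sub_pos.2 (hΦ.strictAntiOn (half_pos hδ) hδ (half_lt_self hδ))
  refine ⟨4 ^ (n - 1) + 1 + |Φ δ - m| / (Φ (δ / 2) - Φ δ), by positivity,
    fun s hs hsδ s' hs' => ?_⟩
  have hanti := hΦ.strictAntiOn.antitoneOn
  have hs'_le : Φ s' ≤ Φ (s / 2) := hanti (half_pos hs) (mem_Ioi.2 (by linarith)) (by linarith)
  have hdouble : Φ δ ≤ Φ (2 * s) := hanti (mem_Ioi.2 (by positivity)) hδ (by linarith)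
  have hs_ge : Φ (δ / 2) - Φ δ ≤ Φ s - Φ δ := by
    gcongr
    exact hanti hs (half_pos hδ) hsδ
  calc Φ s' - m ≤ (Φ (s / 2) - Φ s) + (Φ s - Φ δ) + |Φ δ - m| := by
        linarith [le_abs_self (Φ δ - m)]
    _ ≤ 4 ^ (n - 1) * (Φ s - Φ δ) + (Φ s - Φ δ) +
        |Φ δ - m| * ((Φ s - Φ δ) / (Φ (δ / 2) - Φ δ)) := by
      gcongr
      · exact (hΦ.sub_le_pow_mul_sub hs).trans (by gcongr)
      · exact le_mul_of_one_le_right (abs_nonneg _) ((one_le_div hδ2).2 hs_ge)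
    _ = (4 ^ (n - 1) + 1 + |Φ δ - m| / (Φ (δ / 2) - Φ δ)) * (Φ s - Φ δ) := by ring

end IsNewtonianProfile

theorem isNewtonianProfile_log {c : ℝ} (hc : 0 < c) :
    IsNewtonianProfile 2 c fun r => c * Real.log (1 / r) where
  pos := hc
  hasDerivAt r hr := by
    simp only [one_div, Real.log_inv]
    refine ((Real.hasDerivAt_log hr.ne').neg.const_mul c).congr_deriv ?_
    rw [pow_one]
    ring

theorem isNewtonianProfile_rpow {n : ℕ} {c : ℝ} (hn : 2 < n) (hc : 0 < c) :
    IsNewtonianProfile n (c * (n - 2)) fun r => c * r ^ ((2 : ℝ) - n) where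
  pos := mul_pos hc (sub_pos.2 (by exact_mod_cast hn))
  hasDerivAt r hr := by
    refine ((Real.hasDerivAt_rpow_const (.inl hr.ne')).const_mul c).congr_deriv ?_
    have hexp : (2 : ℝ) - n - 1 = -((n - 1 : ℕ) : ℝ) := by
      rw [Nat.cast_pred (by omega)]
      ring
    rw [hexp, Real.rpow_neg (le_of_lt hr), Real.rpow_natCast]
    ring

variable {E : Type*} [NormedAddCommGroup E] [InnerProductSpace ℝ E] [FiniteDimensional ℝ E]

theorem IsNewtonianProfile.hasDerivAt_norm_add_smul {κ : ℝ} {Φ : ℝ → ℝ}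
    (hΦ : IsNewtonianProfile (finrank ℝ E) κ Φ) {a w : E} {s : ℝ} (h : a + s • w ≠ 0) :
    HasDerivAt (fun s : ℝ => Φ ‖a + s • w‖)
      (-κ * ((inner ℝ (a + s • w) w : ℝ) / ‖a + s • w‖ ^ finrank ℝ E)) s := by
  have hnontrivial : Nontrivial E := ⟨_, _, h⟩
  have hline : HasDerivAt (fun s : ℝ => a + s • w) w s := by
    simpa using ((hasDerivAt_id s).smul_const w).const_add a
  have hnorm : HasDerivAt (fun s : ℝ => ‖a + s • w‖)
      ((inner ℝ (a + s • w) w : ℝ) / ‖a + s • w‖) s := by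
    convert hline.norm_sq.sqrt (pow_ne_zero 2 (norm_ne_zero_iff.2 h)) using 1
    · simp only [Real.sqrt_sq (norm_nonneg _)]
    · rw [Real.sqrt_sq (norm_nonneg _), mul_div_mul_left _ _ two_ne_zero]
  refine ((hΦ.hasDerivAt _ (norm_pos_iff.2 h)).comp s hnorm).congr_deriv ?_
  rw [← pow_sub_one_mul (finrank_pos (R := ℝ) (M := E)).ne']
  field_simp

variable [MeasurableSpace E] [BorelSpace E] {μ : Measure E} [μ.IsAddHaarMeasure]

theorem setIntegral_unitBall_inner_div_norm_pow_eq_zero [Nontrivial E] {a : E} {s : ℝ}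
    (hs : 0 < s) (hsa : s < ‖a‖) :
    ∫ w in ball (0 : E) 1, (inner ℝ (a + s • w) w : ℝ) / ‖a + s • w‖ ^ finrank ℝ E ∂μ = 0 := by
  have hvol : μ.real (ball (0 : E) 1) ≠ 0 := by
    simpa [measureReal_def, ENNReal.toReal_eq_zero_iff, measure_ball_lt_top.ne] using
      (measure_ball_pos μ (0 : E) one_pos).ne'
  have h := setAverage_ball_eq_setAverage_unitBall (μ := μ)
    (fun x : E => (inner ℝ x (x - a) : ℝ) / ‖x‖ ^ finrank ℝ E) a hs
  rw [setAverage_eq, setIntegral_ball_inner_sub_div_norm_pow_eq_zero hs.le hsa, smul_zero,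
    setAverage_eq, eq_comm, smul_eq_zero_iff_right (inv_ne_zero hvol)] at h
  simpa only [add_sub_cancel_left, real_inner_smul_right, mul_div_assoc, integral_const_mul,
    mul_eq_zero, hs.ne', false_or] using h

theorem IsNewtonianProfile.setIntegral_unitBall_norm_add_smul [Nontrivial E] {κ : ℝ} {Φ : ℝ → ℝ}
    (hΦ : IsNewtonianProfile (finrank ℝ E) κ Φ) {a : E} {r : ℝ} (hr : 0 < r) (hra : r < ‖a‖) :
    ∫ w in ball (0 : E) 1, Φ ‖a + r • w‖ ∂μ = ∫ _ in ball (0 : E) 1, Φ ‖a‖ ∂μ := by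
  have hne {s : ℝ} (hs : s ∈ Ioo (-‖a‖) ‖a‖) {w : E} (hw : w ∈ closedBall (0 : E) 1) :
      a + s • w ≠ 0 := by
    refine fun h => (abs_lt.2 hs).not_ge ?_
    rw [eq_neg_of_add_eq_zero_left h, norm_neg, norm_smul, Real.norm_eq_abs]
    exact mul_le_of_le_one_right (abs_nonneg s) (mem_closedBall_zero_iff.1 hw)
  have hderiv {s : ℝ} (hs : s ∈ Ioo (-‖a‖) ‖a‖) :
      HasDerivAt (fun s => ∫ w in ball 0 1, Φ ‖a + s • w‖ ∂μ) (∫ w in ball 0 1,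
        -κ * ((inner ℝ (a + s • w) w : ℝ) / ‖a + s • w‖ ^ finrank ℝ E) ∂μ) s := by
    refine hasDerivAt_setIntegral_of_isCompact (isCompact_closedBall (0 : E) 1)
      measurableSet_ball ball_subset_closedBall isOpen_Ioo ?_ ?_
      (fun s hs w hw => hΦ.hasDerivAt_norm_add_smul (hne hs hw)) hs
    · exact fun s hs => hΦ.continuousOn.comp (by fun_prop) fun w hw => norm_pos_iff.2 (hne hs hw)
    · refine continuousOn_const.mul (ContinuousOn.div (by fun_prop) (by fun_prop) ?_)
      exact fun q hq => pow_ne_zero _ (norm_ne_zero_iff.2 (hne hq.1 hq.2))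
  have hsub : Icc 0 r ⊆ Ioo (-‖a‖) ‖a‖ := fun s hs => ⟨by linarith [hs.1], hs.2.trans_lt hra⟩
  obtain ⟨s, hs, hslope⟩ := exists_hasDerivAt_eq_slope _ _ hr
    (fun s hs => (hderiv (hsub hs)).continuousAt.continuousWithinAt)
    fun s hs => hderiv (hsub (Ioo_subset_Icc_self hs))
  rw [integral_const_mul, setIntegral_unitBall_inner_div_norm_pow_eq_zero hs.1 (hs.2.trans hra),
    mul_zero] at hslope
  have hdiff := (div_eq_zero_iff.1 hslope.symm).resolve_right (by simpa using hr.ne')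
  simpa only [zero_smul, add_zero] using sub_eq_zero.1 hdiff

theorem IsNewtonianProfile.hasMeanValueOn_compl_singleton [Nontrivial E] {κ : ℝ} {Φ : ℝ → ℝ}
    (hΦ : IsNewtonianProfile (finrank ℝ E) κ Φ) (x : E) :
    HasMeanValueOn μ (fun y => Φ ‖x - y‖) {x}ᶜ := by
  intro y _ r hr hball
  have hra : r < ‖y - x‖ := by
    simpa [dist_eq_norm, norm_sub_rev] using fun h : x ∈ closedBall y r => hball h rfl
  rw [setAverage_ball_eq_setAverage_unitBall _ _ hr]
  simp only [norm_sub_rev x, add_sub_right_comm]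
  rw [setAverage_eq, hΦ.setIntegral_unitBall_norm_add_smul hr hra, ← setAverage_eq,
    setAverage_const (measure_ball_pos μ 0 one_pos).ne' measure_ball_lt_top.ne]

theorem exists_isNewtonianProfile {d : ℕ} (hd : 2 ≤ d) {c : ℝ} (hc : 0 < c) {Φ : ℝ → ℝ}
    (hΦ : ∀ r, Φ r = if d = 2 then c * Real.log (1 / r) else c * r ^ ((2 : ℝ) - d)) :
    ∃ κ, IsNewtonianProfile d κ Φ := by
  obtain rfl | hd := hd.eq_or_lt
  · exact ⟨c, by simpa only [funext hΦ, if_true] using isNewtonianProfile_log hc⟩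
  · exact ⟨_, by simpa only [funext hΦ, if_neg hd.ne'] using isNewtonianProfile_rpow hd hc⟩

end NewtonianProfile

section Harmonic

open Filter Module Set Topology

variable {E : Type*} [NormedAddCommGroup E]

theorem exists_mem_ball_norm_lt [NormedSpace ℝ E] [Nontrivial E] (y : E) {r : ℝ} (hr : 0 < r) :
    ∃ w ∈ ball y r, ‖y‖ < ‖w‖ := by
  by_contra! h
  have hy : y ∈ interior (closedBall 0 ‖y‖) := mem_interior.2
    ⟨ball y r, fun w hw => mem_closedBall_zero_iff.2 (h w hw), isOpen_ball, mem_ball_self hr⟩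
  rw [interior_closedBall'] at hy
  exact lt_irrefl _ (mem_ball_zero_iff.1 hy)

variable [MeasurableSpace E]

theorem eqOn_ball_of_le_of_setAverage_eq [BorelSpace E] [ProperSpace E] {μ : Measure E}
    [μ.IsAddHaarMeasure] {f : E → ℝ} {y : E} {r M : ℝ}
    (hf : ContinuousOn f (closedBall y r)) (hle : ∀ w ∈ ball y r, f w ≤ M)
    (hM : ⨍ w in ball y r, f w ∂μ = M) : EqOn f (fun _ => M) (ball y r) := by
  have hint : IntegrableOn f (ball y r) μ :=
    (hf.integrableOn_compact (isCompact_closedBall y r)).mono_set ball_subset_closedBall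
  have hconst : IntegrableOn (fun _ => M) (ball y r) μ :=
    integrableOn_const measure_ball_lt_top.ne
  have hintegral : ∫ w in ball y r, (M - f w) ∂μ = 0 := by
    rw [integral_sub hconst hint, ← measure_smul_setAverage f measure_ball_lt_top.ne, hM,
      setIntegral_const, sub_self]
  have hae := (setIntegral_eq_zero_iff_of_nonneg_ae
    ((ae_restrict_mem measurableSet_ball).mono fun w hw => sub_nonneg.2 (hle w hw))
    (hconst.sub hint)).1 hintegral
  have heq := Measure.eqOn_open_of_ae_eq hae isOpen_ball
    (continuousOn_const.sub (hf.mono ball_subset_closedBall)) continuousOn_const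
  exact fun w hw => (sub_eq_zero.1 (heq hw)).symm

namespace HasMeanValueOn

variable {μ : Measure E} {f : E → ℝ} {D : Set E} {M : ℝ}

/-- Among the points where the maximum is attained take one of largest norm: if it were interior,
the mean value property would propagate the maximum to a point of larger norm. -/
theorem le_of_forall_frontier_le [NormedSpace ℝ E] [FiniteDimensional ℝ E] [Nontrivial E]
    [BorelSpace E] [μ.IsAddHaarMeasure] (hf : HasMeanValueOn μ f D) (hD : IsOpen D)
    (hDb : Bornology.IsBounded D) (hfc : ContinuousOn f (closure D))
    (hM : ∀ z ∈ frontier D, f z ≤ M) {y : E} (hy : y ∈ D) :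
    f y ≤ M := by
  have hcompact : IsCompact (closure D) := hDb.isCompact_closure
  obtain ⟨v, hv, hmax⟩ := hcompact.exists_isMaxOn ⟨y, subset_closure hy⟩ hfc
  have hargmax : IsCompact (closure D ∩ f ⁻¹' {f v}) := hcompact.of_isClosed_subset
    (hfc.preimage_isClosed_of_isClosed isClosed_closure isClosed_singleton) inter_subset_left
  obtain ⟨w, ⟨hwD, hwv⟩, hnorm⟩ :=
    hargmax.exists_isMaxOn ⟨v, hv, rfl⟩ continuous_norm.continuousOn
  suffices hw : w ∈ frontier D from (hmax (subset_closure hy)).trans (hwv ▸ hM w hw)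
  refine hD.frontier_eq ▸ ⟨hwD, fun hwint => ?_⟩
  obtain ⟨r, hr, hball⟩ := nhds_basis_closedBall.mem_iff.1 (hD.mem_nhds hwint)
  obtain ⟨b, hb, hwb⟩ := exists_mem_ball_norm_lt w hr
  have hballD : closedBall w r ⊆ closure D := hball.trans subset_closure
  have hbmax : f b = f v := eqOn_ball_of_le_of_setAverage_eq (hfc.mono hballD)
    (fun a ha => hmax (hballD (ball_subset_closedBall ha)))
    ((hf w hwint r hr hball).symm.trans hwv) hb
  exact (hnorm ⟨hballD (ball_subset_closedBall hb), hbmax⟩).not_gt hwb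

theorem le_of_forall_le_frontier [NormedSpace ℝ E] [FiniteDimensional ℝ E] [Nontrivial E]
    [BorelSpace E] [μ.IsAddHaarMeasure] (hf : HasMeanValueOn μ f D) (hD : IsOpen D)
    (hDb : Bornology.IsBounded D) (hfc : ContinuousOn f (closure D))
    (hM : ∀ z ∈ frontier D, M ≤ f z) {y : E} (hy : y ∈ D) :
    M ≤ f y :=
  neg_le_neg_iff.1 <|
    hf.neg.le_of_forall_frontier_le hD hDb hfc.neg (fun z hz => neg_le_neg (hM z hz)) hy

end HasMeanValueOn

/-- Positive functions with the mean value property, i.e. positive harmonic functions when `f` is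
continuous; this is what the Harnack inequality needs. -/
structure IsPosHarmonicOn (μ : Measure E) (f : E → ℝ) (U : Set E) : Prop where
  hasMeanValueOn : HasMeanValueOn μ f U
  pos : ∀ y ∈ U, 0 < f y

namespace IsPosHarmonicOn

variable {μ : Measure E} {f : E → ℝ} {U V : Set E}

theorem mono (hf : IsPosHarmonicOn μ f V) (hUV : U ⊆ V) : IsPosHarmonicOn μ f U :=
  ⟨hf.hasMeanValueOn.mono hUV, fun y hy => hf.pos y (hUV hy)⟩

theorem integrableOn_ball (hf : IsPosHarmonicOn μ f U) {y : E} {r : ℝ} (hr : 0 < r)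
    (hy : closedBall y r ⊆ U) : IntegrableOn f (ball y r) μ := by
  have hyU : y ∈ U := hy (mem_closedBall_self hr.le)
  refine Integrable.of_integral_ne_zero fun hint => (hf.pos y hyU).ne' ?_
  rw [hf.hasMeanValueOn y hyU r hr hy, setAverage_eq, hint, smul_zero]

theorem le_three_pow_finrank_mul [NormedSpace ℝ E] [FiniteDimensional ℝ E] [BorelSpace E]
    [μ.IsAddHaarMeasure] {p a b : E} {r : ℝ} (hf : IsPosHarmonicOn μ f (ball p (4 * r)))
    (ha : a ∈ ball p r) (hb : b ∈ ball p r) : f a ≤ 3 ^ finrank ℝ E * f b := by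
  have hr : 0 < r := pos_of_mem_ball ha
  rw [mem_ball] at ha hb
  have hab : ball a r ⊆ ball b (3 * r) :=
    ball_subset_ball' (by linarith [dist_triangle_right a b p])
  have haU : closedBall a r ⊆ ball p (4 * r) := closedBall_subset_ball' (by linarith)
  have hbU : closedBall b (3 * r) ⊆ ball p (4 * r) := closedBall_subset_ball' (by linarith)
  have hvol : μ.real (ball b (3 * r)) = 3 ^ finrank ℝ E * μ.real (ball a r) := by
    simp only [measureReal_def, Measure.addHaar_ball_mul_of_pos μ b three_pos,
      Measure.addHaar_ball_center, toReal_mul, toReal_ofReal (pow_nonneg zero_le_three _)]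
  have hnonneg : ∀ w ∈ ball b (3 * r), 0 ≤ f w :=
    fun w hw => (hf.pos w (hbU (ball_subset_closedBall hw))).le
  rw [hf.hasMeanValueOn a (haU (mem_closedBall_self hr.le)) r hr haU,
    hf.hasMeanValueOn b (hbU (mem_closedBall_self (by positivity))) _ (by positivity) hbU,
    setAverage_eq, setAverage_eq, hvol, smul_eq_mul, smul_eq_mul]
  calc (μ.real (ball a r))⁻¹ * ∫ w in ball a r, f w ∂μ
      ≤ (μ.real (ball a r))⁻¹ * ∫ w in ball b (3 * r), f w ∂μ := by
        refine mul_le_mul_of_nonneg_left ?_ (by positivity)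
        exact setIntegral_mono_set (hf.integrableOn_ball (by positivity) hbU)
          ((ae_restrict_mem measurableSet_ball).mono hnonneg) (.of_forall hab)
    _ = 3 ^ finrank ℝ E * ((3 ^ finrank ℝ E * μ.real (ball a r))⁻¹ *
        ∫ w in ball b (3 * r), f w ∂μ) := by
      rw [mul_inv, ← mul_assoc, ← mul_assoc, mul_inv_cancel₀ (by positivity), one_mul]

end IsPosHarmonicOn

end Harmonic

section GreenKernel

open Filter Module Set Topology

/-- The Green kernel of `D`: on `D` it is the fundamental solution `Φ ‖x - ·‖` minus the harmonic
corrector with the same values on `frontier D`. Values on the diagonal only have to be positive. -/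
structure IsGreenKernel {E : Type*} [NormedAddCommGroup E] [MeasurableSpace E] (μ : Measure E)
    (Φ : ℝ → ℝ) (D : Set E) (g : E → E → ℝ) : Prop where
  symm : ∀ x ∈ D, ∀ y ∈ D, g x y = g y x
  pos : ∀ x ∈ D, ∀ y ∈ D, 0 < g x y
  exists_corrector : ∀ x ∈ D, ∃ h : E → ℝ, ContinuousOn h (closure D) ∧ HasMeanValueOn μ h D ∧
    (∀ z ∈ frontier D, h z = Φ ‖x - z‖) ∧ ∀ y ∈ D, y ≠ x → g x y = Φ ‖x - y‖ - h y

namespace IsGreenKernel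

variable {E : Type*} [NormedAddCommGroup E] [Nontrivial E] [MeasurableSpace E] [BorelSpace E]
  {μ : Measure E} [μ.IsAddHaarMeasure] {κ : ℝ} {Φ : ℝ → ℝ} {D : Set E} {g : E → E → ℝ}
  {p x x' y : E} {r δ : ℝ}

section NormedSpace

variable [NormedSpace ℝ E] [FiniteDimensional ℝ E]

theorem norm_sub_sub_le_apply (hg : IsGreenKernel μ Φ D g) (hD : IsOpen D)
    (hDb : Bornology.IsBounded D) {M : ℝ} (hM : ∀ z ∈ frontier D, Φ ‖x - z‖ ≤ M) (hx : x ∈ D)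
    (hy : y ∈ D) (hxy : x ≠ y) : Φ ‖x - y‖ - M ≤ g x y := by
  obtain ⟨h, hc, hmean, hbdry, hgh⟩ := hg.exists_corrector x hx
  rw [hgh y hy hxy.symm]
  gcongr
  exact hmean.le_of_forall_frontier_le hD hDb hc (fun z hz => (hbdry z hz).trans_le (hM z hz)) hy

theorem apply_le_norm_sub_sub (hg : IsGreenKernel μ Φ D g) (hD : IsOpen D)
    (hDb : Bornology.IsBounded D) {m : ℝ} (hm : ∀ z ∈ frontier D, m ≤ Φ ‖x - z‖) (hx : x ∈ D)
    (hy : y ∈ D) (hxy : x ≠ y) : g x y ≤ Φ ‖x - y‖ - m := by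
  obtain ⟨h, hc, hmean, hbdry, hgh⟩ := hg.exists_corrector x hx
  rw [hgh y hy hxy.symm]
  gcongr
  exact hmean.le_of_forall_le_frontier hD hDb hc (fun z hz => (hm z hz).trans_eq (hbdry z hz).symm)
    hy

theorem exists_apply_le_mul_apply_of_dist_le (hg : IsGreenKernel μ Φ D g)
    (hΦ : IsNewtonianProfile (finrank ℝ E) κ Φ) (hD : IsOpen D) (hDb : Bornology.IsBounded D)
    (hδ : 0 < δ) :
    ∃ K, ∀ x ∈ D, ∀ y ∈ D, ∀ x' ∈ D, ∀ y' ∈ D, x ≠ y → x' ≠ y' →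
        (∀ z ∈ frontier D, δ ≤ dist x z) → dist x y ≤ δ / 2 → dist x y ≤ 2 * dist x' y' →
          g x' y' ≤ K * g x y := by
  obtain ⟨R, hR⟩ := isBounded_iff.1 hDb.closure
  obtain ⟨K, hK, hcmp⟩ := hΦ.exists_sub_le_mul_sub hδ (Φ R)
  refine ⟨K, fun x hx y hy x' hx' y' hy' hne hne' hxδ hxy hxy' => ?_⟩
  have hlower : Φ ‖x - y‖ - Φ δ ≤ g x y := by
    refine hg.norm_sub_sub_le_apply hD hDb (fun z hz => ?_) hx hy hne
    have hzδ : δ ≤ ‖x - z‖ := dist_eq_norm x z ▸ hxδ z hz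
    exact hΦ.strictAntiOn.antitoneOn hδ (hδ.trans_le hzδ) hzδ
  have hupper : g x' y' ≤ Φ ‖x' - y'‖ - Φ R := by
    refine hg.apply_le_norm_sub_sub hD hDb (fun z hz => ?_) hx' hy' hne'
    have hpos : 0 < ‖x' - z‖ :=
      norm_sub_pos_iff.2 (ne_of_mem_of_not_mem hx' (hD.frontier_eq ▸ hz).2)
    have hle : ‖x' - z‖ ≤ R := dist_eq_norm x' z ▸ hR (subset_closure hx') hz.1
    exact hΦ.strictAntiOn.antitoneOn hpos (hpos.trans_le hle) hle
  simp only [dist_eq_norm] at hxy hxy'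
  calc g x' y' ≤ Φ ‖x' - y'‖ - Φ R := hupper
    _ ≤ K * (Φ ‖x - y‖ - Φ δ) := hcmp _ (norm_sub_pos_iff.2 hne) hxy _ hxy'
    _ ≤ K * g x y := by gcongr

end NormedSpace

variable [InnerProductSpace ℝ E] [FiniteDimensional ℝ E]

theorem isPosHarmonicOn (hg : IsGreenKernel μ Φ D g)
    (hΦ : IsNewtonianProfile (finrank ℝ E) κ Φ) (hx : x ∈ D) :
    IsPosHarmonicOn μ (g x) (D \ {x}) where
  pos y hy := hg.pos x hx y hy.1
  hasMeanValueOn := by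
    obtain ⟨h, hc, hmean, -, hgh⟩ := hg.exists_corrector x hx
    have hΦc : ContinuousOn (fun y => Φ ‖x - y‖) (D \ {x}) :=
      hΦ.continuousOn.comp (by fun_prop) fun y hy => norm_sub_pos_iff.2 (Ne.symm hy.2)
    have hsub := ((hΦ.hasMeanValueOn_compl_singleton (μ := μ) x).mono fun y hy => hy.2).sub
      (hmean.mono sdiff_subset) hΦc (hc.mono (sdiff_subset.trans subset_closure))
    exact hsub.congr fun y hy => (hgh y hy.1 hy.2).symm

theorem apply_le_three_pow_finrank_mul_apply (hg : IsGreenKernel μ Φ D g)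
    (hΦ : IsNewtonianProfile (finrank ℝ E) κ Φ) (hr : ball p (4 * r) ⊆ D) (hx : x ∈ ball p r)
    (hx' : x' ∈ ball p r) (hy : y ∈ D) (hyp : y ∉ ball p (4 * r)) :
    g x' y ≤ 3 ^ finrank ℝ E * g x y := by
  have hsub : ball p r ⊆ D :=
    (ball_subset_ball (by linarith [pos_of_mem_ball hx])).trans hr
  rw [hg.symm x' (hsub hx') y hy, hg.symm x (hsub hx) y hy]
  refine ((hg.isPosHarmonicOn hΦ hy).mono ?_).le_three_pow_finrank_mul hx' hx
  exact subset_sdiff_singleton hr hyp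

/-- If `x` is near `p`, then either `y` is too, and the singularity of `Φ` dominates the corrector,
or `y` is far away, and the Harnack inequality applies. -/
theorem exists_apply_perturbation_le_mul_of_mem_ball (hg : IsGreenKernel μ Φ D g)
    (hΦ : IsNewtonianProfile (finrank ℝ E) κ Φ) (hD : IsOpen D) (hDb : Bornology.IsBounded D)
    (hr : 0 < r) (hball : closedBall p (11 * r) ⊆ D) :
    ∃ K ≥ 1, ∀ T : E ≃ₜ E, IsLocalPerturbation T p r →
      ∀ x ∈ ball p r, ∀ y ∈ D, x ≠ y → g (T x) (T y) ≤ K * g x y := by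
  obtain ⟨K, hK⟩ := hg.exists_apply_le_mul_apply_of_dist_le hΦ hD hDb
    (show 0 < 10 * r by positivity)
  have h4r : ball p (4 * r) ⊆ D :=
    (ball_subset_closedBall.trans (closedBall_subset_closedBall (by linarith))).trans hball
  have h4 : ball p r ⊆ ball p (4 * r) := ball_subset_ball (by linarith)
  refine ⟨max (3 ^ finrank ℝ E) K, le_max_of_le_left (one_le_pow₀ (by norm_num)),
    fun T hT x hxp y hy hxy => ?_⟩
  have hTD {x} (hx : x ∈ D) : T x ∈ D := hT.apply_mem (h4.trans h4r) hx
  have hx : x ∈ D := h4r (h4 hxp)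
  rw [max_mul_of_nonneg _ _ (hg.pos x hx y hy).le, le_max_iff]
  by_cases hyp : y ∈ ball p (4 * r)
  · right
    refine hK x hx y hy _ (hTD hx) _ (hTD hy) hxy (T.injective.ne hxy) (fun z hz => ?_) ?_ ?_
    · have hzp : z ∉ closedBall p (11 * r) := fun h => (hD.frontier_eq ▸ hz).2 (hball h)
      rw [mem_closedBall, not_le] at hzp
      linarith [mem_ball.1 hxp, dist_triangle_left z p x]
    · linarith [mem_ball.1 hxp, mem_ball.1 hyp, dist_triangle_right x y p]
    · simpa using hT.lipschitzWith_symm.dist_le_mul (T x) (T y)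
  · left
    rw [hT.apply_eq_self y fun h => hyp (h4 h)]
    exact hg.apply_le_three_pow_finrank_mul_apply hΦ h4r hxp (hT.apply_mem_ball hxp) hy hyp

theorem exists_apply_perturbation_le_mul (hg : IsGreenKernel μ Φ D g)
    (hΦ : IsNewtonianProfile (finrank ℝ E) κ Φ) (hD : IsOpen D) (hDb : Bornology.IsBounded D)
    (hr : 0 < r) (hball : closedBall p (11 * r) ⊆ D) :
    ∃ K ≥ 1, ∀ T : E ≃ₜ E, IsLocalPerturbation T p r →
      ∀ x ∈ D, ∀ y ∈ D, x ≠ y → g (T x) (T y) ≤ K * g x y := by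
  obtain ⟨K, hK, hKT⟩ := hg.exists_apply_perturbation_le_mul_of_mem_ball hΦ hD hDb hr hball
  refine ⟨K, hK, fun T hT x hx y hy hxy => ?_⟩
  have hTD {x} (hx : x ∈ D) : T x ∈ D := hT.apply_mem
    ((ball_subset_closedBall.trans (closedBall_subset_closedBall (by linarith))).trans hball) hx
  by_cases hxp : x ∈ ball p r
  · exact hKT T hT x hxp y hy hxy
  by_cases hyp : y ∈ ball p r
  · rw [hg.symm _ (hTD hx) _ (hTD hy), hg.symm x hx y hy]
    exact hKT T hT y hyp x hx hxy.symm
  · rw [hT.apply_eq_self x hxp, hT.apply_eq_self y hyp]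
    exact le_mul_of_one_le_left (hg.pos x hx y hy).le hK

end IsGreenKernel

end GreenKernel

section MomentComparison

open Filter Module Set Topology
open scoped NNReal

/-- The moment densities at `x` are at most `K ^ n` times those at `y`, where `n` is the number of
points, uniformly in the positive harmonic functions that serve as one-point densities. -/
def MomentComparable {E : Type*} [NormedAddCommGroup E] [MeasurableSpace E] (μ : Measure E)
    (D : Set E) (g : E → E → ℝ) (ι : Type*) [DecidableEq ι] (K : ℝ≥0) (x y : E) : Prop :=
  ∀ (u : ι → E → ℝ) (A : Finset ι), A.Nonempty → (∀ i ∈ A, IsPosHarmonicOn μ (u i) D) →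
    ∀ ρ : E → Finset ι → ℝ≥0∞, IsMomentFamily μ D (fun x y => ENNReal.ofReal (g x y))
      (fun i x => ENNReal.ofReal (u i x)) ρ → ρ x A ≤ K ^ A.card * ρ y A

namespace MomentComparable

variable {E : Type*} [NormedAddCommGroup E] [MeasurableSpace E] {μ : Measure E} {D : Set E}
  {g : E → E → ℝ} {ι : Type*} [DecidableEq ι] {K L : ℝ≥0} {x y w : E}

theorem monotone (x y : E) : Monotone fun K => MomentComparable μ D g ι K x y :=
  fun K L hKL h u A hA hu ρ hρ => (h u A hA hu ρ hρ).trans (by gcongr)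

theorem trans (hxy : MomentComparable μ D g ι K x y) (hyw : MomentComparable μ D g ι L y w) :
    MomentComparable μ D g ι (K * L) x w := fun u A hA hu ρ hρ =>
  calc ρ x A ≤ K ^ A.card * ρ y A := hxy u A hA hu ρ hρ
    _ ≤ K ^ A.card * (L ^ A.card * ρ w A) := by
      gcongr
      exact hyw u A hA hu ρ hρ
    _ = (K * L : ℝ≥0) ^ A.card * ρ w A := by
      rw [ENNReal.coe_mul, mul_pow, mul_assoc]

end MomentComparable

variable {E : Type*} [NormedAddCommGroup E] [MeasurableSpace E] [BorelSpace E] {μ : Measure E}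
  [μ.IsAddHaarMeasure] {ι : Type*} [DecidableEq ι] {κ : ℝ} {Φ : ℝ → ℝ} {D : Set E} {g : E → E → ℝ}

theorem IsLocalPerturbation.posHarmonicOn_apply_le [NormedSpace ℝ E] [FiniteDimensional ℝ E]
    {T : E ≃ₜ E} {p x : E} {r : ℝ} (hT : IsLocalPerturbation T p r)
    (hr : ball p (4 * r) ⊆ D) {f : E → ℝ} (hf : IsPosHarmonicOn μ f D) (hx : x ∈ D) :
    f (T x) ≤ 3 ^ finrank ℝ E * f x := by
  by_cases hxp : x ∈ ball p r
  · exact (hf.mono hr).le_three_pow_finrank_mul (hT.apply_mem_ball hxp) hxp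
  · rw [hT.apply_eq_self x hxp]
    exact le_mul_of_one_le_left (hf.pos x hx).le (one_le_pow₀ (by norm_num))

theorem momentComparable_apply_self [NormedSpace ℝ E] [FiniteDimensional ℝ E] [Nontrivial E]
    {T : E ≃ₜ E} (hD : MeasurableSet D) (hTD : T ⁻¹' D = D) (hT : LipschitzWith 2 T)
    {K : ℝ≥0} (hK : 1 ≤ K) (hg : ∀ x ∈ D, ∀ y ∈ D, x ≠ y → g (T x) (T y) ≤ K * g x y)
    (hu : ∀ f, IsPosHarmonicOn μ f D → ∀ x ∈ D, f (T x) ≤ K * f x) {x : E} (hx : x ∈ D) :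
    MomentComparable μ D g ι ((2 ^ finrank ℝ E * K) ^ 2) (T x) x := by
  intro u A hA hpos ρ hρ
  have hofReal {a b : ℝ} (hab : a ≤ K * b) : ENNReal.ofReal a ≤ K * ENNReal.ofReal b := by
    simpa only [ofReal_mul K.coe_nonneg, ofReal_coe_nnreal] using ofReal_le_ofReal hab
  have h2 : (1 : ℝ≥0∞) ≤ 2 ^ finrank ℝ E := one_le_pow₀ one_le_two
  have h := hρ.mul_comp_le_pow_card_mul hD (T := T) (V := 2 ^ finrank ℝ E)
    (K := 2 ^ finrank ℝ E * K) (fun y hy => hTD.ge hy) (by finiteness)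
    (fun F => ?_) (fun y hy => ?_) hA (fun i hi y hy => ?_) hx
  · push_cast
    refine (le_mul_of_one_le_left zero_le ?_).trans h
    exact one_le_mul h2 (by exact_mod_cast hK)
  · simpa [hTD] using setLIntegral_le_pow_finrank_mul_setLIntegral_comp hT D F
  · filter_upwards [ae_restrict_mem hD, Measure.ae_ne _ y] with w hw hwy
    rw [mul_assoc]
    gcongr
    exact hofReal (hg y hy w hw hwy.symm)
  · exact (hofReal (hu (u i) (hpos i hi) y hy)).trans
      (by gcongr; exact le_mul_of_one_le_left zero_le h2)

variable [InnerProductSpace ℝ E] [FiniteDimensional ℝ E] [Nontrivial E]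

theorem exists_eventually_momentComparable (hD : IsOpen D) (hDb : Bornology.IsBounded D)
    (hΦ : IsNewtonianProfile (finrank ℝ E) κ Φ) (hg : IsGreenKernel μ Φ D g) {p : E} (hp : p ∈ D) :
    ∃ K : ℝ≥0, ∀ᶠ q in 𝓝[D] p,
      MomentComparable μ D g ι K p q ∧ MomentComparable μ D g ι K q p := by
  obtain ⟨ε, hε, hball⟩ := nhds_basis_closedBall.mem_iff.1 (hD.mem_nhds hp)
  obtain ⟨r, hr, rfl⟩ : ∃ r > 0, ε = 11 * r := ⟨ε / 11, by positivity, by ring⟩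
  have h4r : ball p (4 * r) ⊆ D :=
    (ball_subset_closedBall.trans (closedBall_subset_closedBall (by linarith))).trans hball
  have hrD : ball p r ⊆ D := (ball_subset_ball (by linarith)).trans h4r
  obtain ⟨K, hK, hKg⟩ := hg.exists_apply_perturbation_le_mul hΦ hD hDb hr hball
  set L : ℝ≥0 := max (3 ^ finrank ℝ E) K.toNNReal
  have hKL : K ≤ L := (le_max_right _ _).trans' (Real.le_coe_toNNReal K)
  have h3L : (3 : ℝ) ^ finrank ℝ E ≤ L := by
    have h : 3 ^ finrank ℝ E ≤ L := le_max_left _ _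
    exact_mod_cast h
  have hL : 1 ≤ L := by exact_mod_cast hK.trans hKL
  have hmove {T : E ≃ₜ E} (hT : IsLocalPerturbation T p r) {x : E} (hx : x ∈ D) :
      MomentComparable μ D g ι ((2 ^ finrank ℝ E * L) ^ 2) (T x) x := by
    refine momentComparable_apply_self hD.measurableSet (hT.preimage_eq hrD) hT.lipschitzWith hL
      (fun x hx y hy hxy => ?_) (fun f hf x hx => ?_) hx
    · have hpos := hg.pos x hx y hy
      exact (hKg T hT x hx y hy hxy).trans (by gcongr)
    · have hpos := hf.pos x hx
      exact (hT.posHarmonicOn_apply_le h4r hf hx).trans (by gcongr)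
  refine ⟨(2 ^ finrank ℝ E * L) ^ 2, mem_nhdsWithin_of_mem_nhds ?_⟩
  filter_upwards [ball_mem_nhds p (half_pos hr)] with q hq
  obtain ⟨T, hT, rfl⟩ := exists_isLocalPerturbation_apply_eq hq
  exact ⟨by simpa using hmove hT.symm (hT.apply_mem hrD hp), hmove hT hp⟩

theorem moment_density_comparison_general (hD : IsOpen D) (hDb : Bornology.IsBounded D)
    (hDconn : IsPreconnected D) (hΦ : IsNewtonianProfile (finrank ℝ E) κ Φ)
    (hg : IsGreenKernel μ Φ D g) {C : Set E} (hC : IsCompact C) (hCD : C ⊆ D) :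
    ∃ K : ℝ≥0, 0 < K ∧ ∀ x ∈ C, ∀ y ∈ C, MomentComparable μ D g ι K x y := by
  obtain ⟨K, hK⟩ := exists_forall_rel_of_isPreconnected_of_isCompact
    (R := MomentComparable μ D g ι) MomentComparable.monotone MomentComparable.trans hDconn
    (fun _ hp => exists_eventually_momentComparable hD hDb hΦ hg hp) hC hCD
  exact ⟨K + 1, by positivity, fun x hx y hy =>
    MomentComparable.monotone x y le_self_add (hK x hx y hy)⟩

end MomentComparison

/-- **Main comparison theorem.** Let `D ⊂ ℝ^d`, `d ≥ 2`, be a bounded (smooth) domain,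
`g` its Green's kernel (characterized as the fundamental solution `Φ‖x - ·‖` minus a
harmonic corrector, harmonicity being expressed by the mean value property, with
boundary values making `g` vanish on `∂D`), `k` its Poisson kernel (characterized as
the positive kernel, harmonic in the interior variable, vanishing at boundary points
other than its pole, which represents harmonic functions against the surface measure
`σ`), and let `ρ` be the moment densities defined by the recursion
`ρ(x, z_{i}) = k(x, z_i)`,
`ρ(x, z_A) = ∑_{∅ ≠ B ⊊ A} ∫_D g(x,y) ρ(y,z_B) ρ(y,z_{A∖B}) dy`.
Then for every compact `C ⊆ D` there is `λ > 0`, depending only on `C` and `D`, with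
`ρ(x, z_1, …, z_n) ≤ λ^n ρ(x₀, z_1, …, z_n)` for all `n ≥ 1`, all `x, x₀ ∈ C` and all
distinct `z_1, …, z_n ∈ ∂D`. -/
theorem moment_density_comparison (d : ℕ) (hd : 2 ≤ d)
    (D : Set (EuclideanSpace ℝ (Fin d))) (hD : IsOpen D) (hDb : Bornology.IsBounded D)
    (hDconn : IsConnected D)
    -- the surface measure on `∂D`
    (σ : Measure (EuclideanSpace ℝ (Fin d))) (hσ : σ (frontier D)ᶜ = 0)
    -- the normalizing constant and fundamental solution `Φ` of `Δu = 2δ₀`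
    (c : ℝ) (hc : 0 < c)
    (Φ : ℝ → ℝ)
    (hΦ : ∀ r : ℝ, Φ r = if d = 2 then c * Real.log (1 / r) else c * r ^ ((2 : ℝ) - d))
    -- the Green's kernel `g` of `D`
    (g : EuclideanSpace ℝ (Fin d) → EuclideanSpace ℝ (Fin d) → ℝ)
    (hg_sym : ∀ x ∈ D, ∀ y ∈ D, g x y = g y x)
    (hg_pos : ∀ x ∈ D, ∀ y ∈ D, 0 < g x y)
    (hg_rep : ∀ x ∈ D, ∃ h : EuclideanSpace ℝ (Fin d) → ℝ,
      ContinuousOn h (closure D) ∧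
      (∀ y ∈ D, ∀ r > 0, closedBall y r ⊆ D → h y = ⨍ w in ball y r, h w ∂volume) ∧
      (∀ z ∈ frontier D, h z = Φ ‖x - z‖) ∧
      (∀ y ∈ D, y ≠ x → g x y = Φ ‖x - y‖ - h y))
    -- the Poisson kernel `k` of `D`
    (k : EuclideanSpace ℝ (Fin d) → EuclideanSpace ℝ (Fin d) → ℝ)
    (hk_pos : ∀ x ∈ D, ∀ z ∈ frontier D, 0 < k x z)
    (hk_harm : ∀ z ∈ frontier D, ∀ y ∈ D, ∀ r > 0, closedBall y r ⊆ D →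
      k y z = ⨍ w in ball y r, k w z ∂volume)
    (hk_bdry : ∀ z ∈ frontier D, ∀ w ∈ frontier D, w ≠ z →
      Filter.Tendsto (fun y => k y z) (nhdsWithin w D) (nhds 0))
    (hk_poisson : ∀ x ∈ D, ∀ f : EuclideanSpace ℝ (Fin d) → ℝ,
      ContinuousOn f (closure D) →
      (∀ y ∈ D, ∀ r > 0, closedBall y r ⊆ D → f y = ⨍ w in ball y r, f w ∂volume) →
      f x = ∫ z, f z * k x z ∂σ) :
    -- conclusion: the Harnack-type comparison for the moment densities `ρ`
    ∀ C : Set (EuclideanSpace ℝ (Fin d)), IsCompact C → C ⊆ D →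
      ∃ lam : ℝ, 0 < lam ∧
        ∀ (z : ℕ → EuclideanSpace ℝ (Fin d)) (A : Finset ℕ), A.Nonempty →
          (∀ i ∈ A, z i ∈ frontier D) → Set.InjOn z A →
          ∀ ρ : EuclideanSpace ℝ (Fin d) → Finset ℕ → ℝ≥0∞,
            (∀ x i, ρ x {i} = ENNReal.ofReal (k x (z i))) →
            (∀ x (A' : Finset ℕ), 2 ≤ A'.card →
              ρ x A' = ∑ B ∈ A'.powerset.filter (fun B => B ≠ ∅ ∧ B ≠ A'),
                ∫⁻ y in D, ENNReal.ofReal (g x y) * ρ y B * ρ y (A' \ B) ∂volume) →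
            ∀ x ∈ C, ∀ x0 ∈ C,
              ρ x A ≤ ENNReal.ofReal lam ^ A.card * ρ x0 A := by
  intro C hC hCD
  have : Nontrivial (EuclideanSpace ℝ (Fin d)) :=
    Module.nontrivial_of_finrank_pos (R := ℝ) (by rw [finrank_euclideanSpace_fin]; omega)
  obtain ⟨κ, hκ⟩ := exists_isNewtonianProfile hd hc hΦ
  obtain ⟨K, hKpos, hK⟩ := moment_density_comparison_general (ι := ℕ) hD hDb
    hDconn.isPreconnected (by rwa [finrank_euclideanSpace_fin]) ⟨hg_sym, hg_pos, hg_rep⟩ hC hCD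
  refine ⟨K, hKpos, fun z A hA hz _ ρ hρ₁ hρ₂ x hx x0 hx0 => ?_⟩
  rw [ofReal_coe_nnreal]
  exact hK x hx x0 hx0 (fun i y => k y (z i)) A hA
    (fun i hi => ⟨hk_harm (z i) (hz i hi), fun y hy => hk_pos y hy (z i) (hz i hi)⟩) ρ
    ⟨fun y _ => hρ₁ y, fun y _ => hρ₂ y⟩
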